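/- For a bounded kernel weight function W with |W(k)| ≤ W_max for all k in a finite index set F, and matrices P_{t+k} with all entries in [0, C·α], the weighted average P_{t,r} = |F|⁻¹ Σ_{k∈F} W(k) P_{t+k} satisfies: for any unit vectors x, y ∈ ℝⁿ, the sum over pairs (i,j) with |x_i y_j| > √(Cαr/n) of |x_i y_j P_{t,r}(i,j)| is at most W_max·√(Cnα/r), where r = |F| (assume |F| ≥ r ≥ 1). -/

import Mathlib

/-!
On a heavy pair `|x i * y j|` exceeds the threshold `s = √(b / t)`, so
`|x i * y j| ≤ (x i * y j) ^ 2 / s`. Summing the squares over all pairs gives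
`(∑ i, x i ^ 2) * ∑ j, y j ^ 2`, while every entry of the weighted average is at most `w * b` in
absolute value, and `w * b / s = w * √(b * t)`. In the application `b = C * α` and `t = n / r`.
-/

open Finset

theorem norm_inv_card_smul_sum_le {ι E : Type*} [SeminormedAddCommGroup E] [NormedSpace ℝ E]
    {s : Finset ι} (hs : s.Nonempty) {f : ι → E} {b : ℝ} (hf : ∀ k ∈ s, ‖f k‖ ≤ b) :
    ‖(#s : ℝ)⁻¹ • ∑ k ∈ s, f k‖ ≤ b := by
  have hcard : (0 : ℝ) < #s := mod_cast hs.card_pos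
  rw [norm_smul, norm_inv, RCLike.norm_natCast, inv_mul_le_iff₀ hcard]
  simpa only [sum_const, nsmul_eq_mul] using norm_sum_le_of_le s hf

theorem abs_weighted_average_apply_le {ι m n : Type*} [Fintype ι] [Nonempty ι]
    {W : ι → ℝ} {w : ℝ} (hW : ∀ k, |W k| ≤ w)
    {P : ι → Matrix m n ℝ} {b : ℝ} {i : m} {j : n} (hP : ∀ k, |P k i j| ≤ b) :
    |((Fintype.card ι : ℝ)⁻¹ • ∑ k, W k • P k) i j| ≤ w * b := by
  have weighted_le (k : ι) : ‖(W k • P k) i j‖ ≤ w * b := norm_mul_le_of_le (hW k) (hP k)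
  rw [Matrix.smul_apply, Matrix.sum_apply]
  exact norm_inv_card_smul_sum_le univ_nonempty fun k _ => weighted_le k

theorem sum_abs_mul_filter_lt_le {β : Type*} (T : Finset β) {a f : β → ℝ} {s B : ℝ} (hs : 0 < s)
    (hf : ∀ p ∈ T, |f p| ≤ B) :
    ∑ p ∈ T with s < |a p|, |a p * f p| ≤ B / s * ∑ p ∈ T, a p ^ 2 := by
  have bound_nonneg {p} (hp : p ∈ T) : 0 ≤ B := (abs_nonneg _).trans (hf p hp)
  have heavy_le {p} (hp : p ∈ T) (hsp : s < |a p|) : |a p * f p| ≤ B / s * a p ^ 2 := by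
    have hB := bound_nonneg hp
    calc |a p * f p| = |a p| * |f p| := abs_mul _ _
      _ ≤ |a p| * B := by gcongr; exact hf p hp
      _ = B / s * (s * |a p|) := by field_simp
      _ ≤ B / s * (|a p| * |a p|) := by gcongr
      _ = B / s * a p ^ 2 := by rw [abs_mul_abs_self, sq]
  calc ∑ p ∈ T with s < |a p|, |a p * f p|
      ≤ ∑ p ∈ T with s < |a p|, B / s * a p ^ 2 :=
        sum_le_sum fun p hp => heavy_le (mem_filter.mp hp).1 (mem_filter.mp hp).2
    _ ≤ ∑ p ∈ T, B / s * a p ^ 2 :=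
        sum_le_sum_of_subset_of_nonneg (filter_subset _ _) fun p hp _ =>
          mul_nonneg (div_nonneg (bound_nonneg hp) hs.le) (sq_nonneg _)
    _ = B / s * ∑ p ∈ T, a p ^ 2 := (mul_sum _ _ _).symm

theorem div_sqrt_div_eq_sqrt_mul {b : ℝ} (hb : 0 ≤ b) (t : ℝ) : b / √(b / t) = √(b * t) := by
  rw [Real.sqrt_div hb, Real.sqrt_mul hb, div_div_eq_mul_div, mul_div_right_comm, Real.div_sqrt]

theorem heavy_pairs_bound_general {ι m n : Type*} [Fintype ι] [Nonempty ι] [Fintype m] [Fintype n]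
    {W : ι → ℝ} {w : ℝ} (hW : ∀ k, |W k| ≤ w)
    {P : ι → Matrix m n ℝ} {b : ℝ} (hb : 0 < b) (hP : ∀ k i j, |P k i j| ≤ b)
    {t : ℝ} (ht : 0 < t) (x : m → ℝ) (y : n → ℝ) :
    ∑ p : m × n with √(b / t) < |x p.1 * y p.2|,
        |x p.1 * y p.2 * ((Fintype.card ι : ℝ)⁻¹ • ∑ k, W k • P k) p.1 p.2| ≤
      w * √(b * t) * ((∑ i, x i ^ 2) * ∑ j, y j ^ 2) := by
  have sum_sq : ∑ p : m × n, (x p.1 * y p.2) ^ 2 = (∑ i, x i ^ 2) * ∑ j, y j ^ 2 := by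
    simp only [mul_pow, Fintype.sum_prod_type, Fintype.sum_mul_sum]
  rw [← div_sqrt_div_eq_sqrt_mul hb.le, ← mul_div_assoc, ← sum_sq]
  exact sum_abs_mul_filter_lt_le univ (Real.sqrt_pos.mpr (div_pos hb ht))
    fun p _ => abs_weighted_average_apply_le hW fun k => hP k p.1 p.2

theorem heavy_pairs_bound {n : ℕ} {ι : Type*} [Fintype ι] [Nonempty ι]
    (W : ι → ℝ) (Wmax : ℝ) (hW : ∀ k, |W k| ≤ Wmax)
    (C α : ℝ) (hC : 0 < C) (hα : 0 < α)
    (Pm : ι → Matrix (Fin n) (Fin n) ℝ)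
    (hPm : ∀ k i j, Pm k i j ∈ Set.Icc (0 : ℝ) (C * α))
    (r : ℕ) (hr1 : 1 ≤ r) (hr2 : r ≤ Fintype.card ι)
    (x y : Fin n → ℝ) (hx : ∑ i, x i ^ 2 = 1) (hy : ∑ i, y i ^ 2 = 1)
    (Pbar : Matrix (Fin n) (Fin n) ℝ)
    (hPbar : Pbar = (Fintype.card ι : ℝ)⁻¹ • ∑ k, W k • Pm k) :
    ∑ p ∈ Finset.univ.filter
        (fun p : Fin n × Fin n => Real.sqrt (C * α * r / n) < |x p.1 * y p.2|),
      |x p.1 * y p.2 * Pbar p.1 p.2| ≤ Wmax * Real.sqrt (C * n * α / r) := by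
  have hn : 0 < n := Nat.pos_of_ne_zero (by rintro rfl; simp at hx)
  have abs_entry_le (k i j) : |Pm k i j| ≤ C * α :=
    (abs_of_nonneg (hPm k i j).1).trans_le (hPm k i j).2
  have threshold_eq : C * α * r / n = C * α / (n / r) := (div_div_eq_mul_div _ _ _).symm
  have bound_eq : C * n * α / r = C * α * (n / r) := by ring
  rw [hPbar, threshold_eq, bound_eq]
  simpa only [hx, hy, mul_one] using heavy_pairs_bound_general hW (mul_pos hC hα) abs_entry_le
    (div_pos (Nat.cast_pos.mpr hn) (Nat.cast_pos.mpr hr1)) x y
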